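/- Let A and B be elementarily equivalent self-additive CLOs and let b ∈ B. Then the canonical embedding of A + (b/∼) + A into A + B + A (the identity on both copies of A and the inclusion of the ∼-class b/∼ ⊆ B) is an elementary embedding. -/

import Mathlib

open FirstOrder Language Set

/-- Relation symbols of the language `L_κ` of colored linear orders:
a binary `<` and a unary color predicate for each `i : ι`. -/
inductive CLORel (ι : Type) : ℕ → Type
  | lt : CLORel ι 2
  | color (i : ι) : CLORel ι 1

/-- The language `L_κ`, where the colors are indexed by `ι`. -/
def CLOLang (ι : Type) : Language :=
  ⟨fun _ => Empty, CLORel ι⟩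

/-- Interpretation of the relation symbols on a linear order `M` with colors `c`. -/
def cloRelMap {ι M : Type} [LinearOrder M] (c : ι → Set M) :
    ∀ {n}, CLORel ι n → (Fin n → M) → Prop
  | _, .lt => fun v => v 0 < v 1
  | _, .color i => fun v => v 0 ∈ c i

/-- The canonical `L_κ`-structure (a colored linear order, CLO) on a linear
order `M` whose colors are given by `c : ι → Set M`. -/
def CLOStr (ι M : Type) [LinearOrder M] (c : ι → Set M) : (CLOLang ι).Structure M where
  funMap := fun f => Empty.elim f
  RelMap := cloRelMap c

/-- Satisfaction of an `L_κ`-formula in the CLO `(M, <, c)`. -/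
def Sat {ι : Type} (M : Type) [LinearOrder M] (c : ι → Set M) {α : Type}
    (φ : (CLOLang ι).Formula α) (v : α → M) : Prop :=
  letI := CLOStr ι M c
  φ.Realize v

/-- The induced colors on a subset of a CLO. -/
def subColor {ι M : Type} (c : ι → Set M) (s : Set M) : ι → Set s :=
  fun i => {x | (x : M) ∈ c i}

/-- Elementary equivalence of CLOs. -/
def CLOEquiv (ι : Type) (M : Type) [LinearOrder M] (cM : ι → Set M)
    (N : Type) [LinearOrder N] (cN : ι → Set N) : Prop :=
  letI := CLOStr ι M cM
  letI := CLOStr ι N cN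
  M ≅[CLOLang ι] N

/-- Isomorphism of CLOs (as `L_κ`-structures). -/
def CLOIso (ι : Type) (M : Type) [LinearOrder M] (cM : ι → Set M)
    (N : Type) [LinearOrder N] (cN : ι → Set N) : Prop :=
  letI := CLOStr ι M cM
  letI := CLOStr ι N cN
  Nonempty (M ≃[CLOLang ι] N)

/-- The complete theory of a CLO. -/
def CLOTheory (ι : Type) (M : Type) [LinearOrder M] (c : ι → Set M) : (CLOLang ι).Theory :=
  letI := CLOStr ι M c
  (CLOLang ι).completeTheory M

/-- The induced colors on a lexicographic sum `Σₗ i, A i` of CLOs. -/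
def sigmaColor {ι I : Type} {A : I → Type} (c : ∀ i, ι → Set (A i)) :
    ι → Set (Σₗ i, A i) :=
  fun k => {x | (ofLex x).2 ∈ c (ofLex x).1 k}

/-- The induced colors on a two-term lexicographic sum `α ⊕ₗ β` of CLOs. -/
def sumColor2 {ι α β : Type} (ca : ι → Set α) (cb : ι → Set β) : ι → Set (α ⊕ₗ β) :=
  fun k => {x | Sum.elim (· ∈ ca k) (· ∈ cb k) (ofLex x)}

/-- The set defined by a parameter-free formula in one variable in a CLO. -/
def FmlSet (ι : Type) (M : Type) [LinearOrder M] (c : ι → Set M)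
    (φ : (CLOLang ι).Formula Unit) : Set M :=
  {x | Sat M c φ fun _ => x}

/-- A CLO is self-additive if it has more than one point and its only
convex parameter-free-definable subsets are `∅` and the whole order. -/
def SelfAdditive (ι : Type) (M : Type) [LinearOrder M] (c : ι → Set M) : Prop :=
  Nontrivial M ∧
    ∀ φ : (CLOLang ι).Formula Unit, (FmlSet ι M c φ).OrdConnected →
      FmlSet ι M c φ = ∅ ∨ FmlSet ι M c φ = Set.univ

/-- `a ∼ b`: some set definable with parameter `a` is convex, bounded above and
below, and contains both `a` and `b`. -/
def SimRel (ι : Type) {M : Type} [LinearOrder M] (c : ι → Set M) (a b : M) : Prop :=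
  ∃ φ : (CLOLang ι).Formula (Unit ⊕ Unit),
    (Set.OrdConnected {x | Sat M c φ (Sum.elim (fun _ => x) fun _ => a)}) ∧
    (∃ u : M, ∀ z ∈ {x | Sat M c φ (Sum.elim (fun _ => x) fun _ => a)}, z < u) ∧
    (∃ l : M, ∀ z ∈ {x | Sat M c φ (Sum.elim (fun _ => x) fun _ => a)}, l < z) ∧
    a ∈ {x | Sat M c φ (Sum.elim (fun _ => x) fun _ => a)} ∧
    b ∈ {x | Sat M c φ (Sum.elim (fun _ => x) fun _ => a)}

/-- `f : M → N` is an elementary map of CLOs. -/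
def IsElemMap (ι : Type) {M N : Type} [LinearOrder M] [LinearOrder N]
    (cM : ι → Set M) (cN : ι → Set N) (f : M → N) : Prop :=
  ∀ (k : ℕ) (φ : (CLOLang ι).Formula (Fin k)) (v : Fin k → M),
    Sat M cM φ v ↔ Sat N cN φ (f ∘ v)

/-- A subset of a CLO, with its induced structure, is an elementary substructure. -/
def IsElemSubset (ι : Type) (B : Type) [LinearOrder B] (cB : ι → Set B) (s : Set B) : Prop :=
  IsElemMap ι (subColor cB s) cB (Subtype.val : s → B)

/-- A complete `L_κ`-theory is ℵ₀-categorical: any two at-most-countable CLO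
models of it are isomorphic.  (Finite and empty models are allowed.) -/
def Aleph0CatTheory (ι : Type) (T : (CLOLang ι).Theory) : Prop :=
  ∀ (N₁ N₂ : Type) (i₁ : LinearOrder N₁) (i₂ : LinearOrder N₂)
    (c₁ : ι → Set N₁) (c₂ : ι → Set N₂),
    Countable N₁ → Countable N₂ →
    (letI := i₁; CLOTheory ι N₁ c₁) = T → (letI := i₂; CLOTheory ι N₂ c₂) = T →
    (letI := i₁; letI := i₂; CLOIso ι N₁ c₁ N₂ c₂)

/-- `φ` is a convex formula for the complete theory of the CLO `(M₀, c₀)`: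
its realizations in every model of that theory form a convex set. -/
def ConvexFml (ι : Type) (M₀ : Type) [LinearOrder M₀] (c₀ : ι → Set M₀)
    (φ : (CLOLang ι).Formula Unit) : Prop :=
  ∀ (B : Type) (iB : LinearOrder B) (cB : ι → Set B),
    (letI := iB; CLOEquiv ι B cB M₀ c₀) → (letI := iB; Set.OrdConnected (FmlSet ι B cB φ))

/-- The set of common realizations of a set of one-variable formulas in a CLO. -/
def TypeSet (ι : Type) (M : Type) [LinearOrder M] (c : ι → Set M)
    (Φ : Set ((CLOLang ι).Formula Unit)) : Set M :=
  {x | ∀ φ ∈ Φ, Sat M c φ fun _ => x}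

/-- A set of one-variable formulas is consistent with the complete theory of
`(M₀, c₀)`: it is realized in some model of that theory. -/
def TypeConsistent (ι : Type) (M₀ : Type) [LinearOrder M₀] (c₀ : ι → Set M₀)
    (Φ : Set ((CLOLang ι).Formula Unit)) : Prop :=
  ∃ (B : Type) (iB : LinearOrder B) (cB : ι → Set B),
    (letI := iB; CLOEquiv ι B cB M₀ c₀) ∧ (letI := iB; ∃ b : B, b ∈ TypeSet ι B cB Φ)

/-- `Φ` is a convex type of the complete theory of `(M₀, c₀)`: a maximal
consistent set of convex formulas over `∅`.  `IT(T)` is the set of all such. -/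
def IsConvexType (ι : Type) (M₀ : Type) [LinearOrder M₀] (c₀ : ι → Set M₀)
    (Φ : Set ((CLOLang ι).Formula Unit)) : Prop :=
  (∀ φ ∈ Φ, ConvexFml ι M₀ c₀ φ) ∧ TypeConsistent ι M₀ c₀ Φ ∧
    ∀ ψ, ConvexFml ι M₀ c₀ ψ → TypeConsistent ι M₀ c₀ (insert ψ Φ) → ψ ∈ Φ

/-- A convex type is isolated if it contains a convex formula contained in no
other convex type. -/
def IsolatedCT (ι : Type) (M₀ : Type) [LinearOrder M₀] (c₀ : ι → Set M₀)
    (Φ : Set ((CLOLang ι).Formula Unit)) : Prop :=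
  ∃ φ ∈ Φ, ConvexFml ι M₀ c₀ φ ∧
    ∀ Ψ, IsConvexType ι M₀ c₀ Ψ → φ ∈ Ψ → Ψ = Φ

/-- A CLO is ℵ₀-saturated: every finitely-satisfiable set of formulas in one
variable over finitely many parameters is realized. -/
def Aleph0Saturated (ι : Type) (S : Type) [LinearOrder S] (cS : ι → Set S) : Prop :=
  ∀ (m : ℕ) (a : Fin m → S) (p : Set ((CLOLang ι).Formula (Unit ⊕ Fin m))),
    (∀ q : Finset ((CLOLang ι).Formula (Unit ⊕ Fin m)), ↑q ⊆ p →
      ∃ x : S, ∀ φ ∈ q, Sat S cS φ (Sum.elim (fun _ => x) a)) →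
    ∃ x : S, ∀ φ ∈ p, Sat S cS φ (Sum.elim (fun _ => x) a)

/-- A CLO is strongly ℵ₀-homogeneous: finite tuples with the same complete type
are conjugate under an automorphism. -/
def StronglyAleph0Homogeneous (ι : Type) (S : Type) [LinearOrder S] (cS : ι → Set S) : Prop :=
  ∀ (m : ℕ) (a b : Fin m → S),
    (∀ φ : (CLOLang ι).Formula (Fin m), Sat S cS φ a ↔ Sat S cS φ b) →
    ∃ g : S ≃ S, (∀ x y : S, x < y ↔ g x < g y) ∧
      (∀ (k : ι) (x : S), x ∈ cS k ↔ g x ∈ cS k) ∧ ∀ i, g (a i) = b i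

/-- Sufficiently saturated: ℵ₀-saturated and strongly ℵ₀-homogeneous. -/
def SuffSaturated (ι : Type) (S : Type) [LinearOrder S] (cS : ι → Set S) : Prop :=
  Aleph0Saturated ι S cS ∧ StronglyAleph0Homogeneous ι S cS

/-- The complete theory of `(M₀, c₀)` is locally simple: for every sufficiently
saturated model `S` and every convex type `Φ`, the theory `T_Φ = Th(Φ(S))` is
ℵ₀-categorical. -/
def LocallySimple (ι : Type) (M₀ : Type) [LinearOrder M₀] (c₀ : ι → Set M₀) : Prop :=
  ∀ (S : Type) [LinearOrder S], ∀ (cS : ι → Set S),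
    CLOEquiv ι S cS M₀ c₀ → SuffSaturated ι S cS →
    ∀ Φ, IsConvexType ι M₀ c₀ Φ →
      Aleph0CatTheory ι
        (CLOTheory ι (TypeSet ι S cS Φ) (subColor cS (TypeSet ι S cS Φ)))

/-- A finite set of pairs is a partial isomorphism of CLOs: it preserves `<`,
equality, and each color, in both directions. -/
def IsPartialIso (ι : Type) {M N : Type} [LinearOrder M] [LinearOrder N]
    (cM : ι → Set M) (cN : ι → Set N) (f : Finset (M × N)) : Prop :=
  ∀ p ∈ f, ∀ q ∈ f,
    (p.1 < q.1 ↔ p.2 < q.2) ∧ (p.1 = q.1 ↔ p.2 = q.2) ∧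
    ∀ k, p.1 ∈ cM k ↔ p.2 ∈ cN k

/-- Back-and-forth equivalence of CLOs: a nonempty family of finite partial
isomorphisms with the back-and-forth extension properties. -/
def BackForthEquiv (ι : Type) (M : Type) [LinearOrder M] (cM : ι → Set M)
    (N : Type) [LinearOrder N] (cN : ι → Set N) : Prop :=
  ∃ F : Set (Finset (M × N)), F.Nonempty ∧ (∀ f ∈ F, IsPartialIso ι cM cN f) ∧
    (∀ f ∈ F, ∀ m : M, ∃ g ∈ F, f ⊆ g ∧ ∃ n : N, (m, n) ∈ g) ∧
    (∀ f ∈ F, ∀ n : N, ∃ g ∈ F, f ⊆ g ∧ ∃ m : M, (m, n) ∈ g)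

/-- The set of complete theories `Th(Φ(A))` as `A` ranges over models of the
complete theory of `(M₀, c₀)` (including the theory of the empty structure,
in case `Φ` is omitted). -/
def TheoriesAt (ι : Type) (M₀ : Type) [LinearOrder M₀] (c₀ : ι → Set M₀)
    (Φ : Set ((CLOLang ι).Formula Unit)) : Set ((CLOLang ι).Theory) :=
  {T | ∃ (A : Type) (iA : LinearOrder A) (cA : ι → Set A),
    (letI := iA; CLOEquiv ι A cA M₀ c₀) ∧
    T = (letI := iA; CLOTheory ι (TypeSet ι A cA Φ) (subColor cA (TypeSet ι A cA Φ)))}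

/-!
In finitely many colors there are finitely many Ehrenfeucht–Fraïssé types `tp` of each rank `n`,
each expressible by a formula, and the type of a sum is the sum of the types. Let `M` be
self-additive. Since a nonempty definable convex subset of `M` is all of `M`, each of the finitely
many types of points recurs arbitrarily far down, and from this one gets, by induction on `n`, that
`tp (x, d) = tp (x, ∞) + tp (-∞, d)` for all `x` far enough below `d`. In particular
`tp M + tp (-∞, d) = tp (-∞, d)`.

Let `C` be the class of `d`. The displayed equality holds for every `x < d` outside `C`, because
otherwise the bounded definable convex sets which witness `∼` could be enlarged to contain `x`.
Playing the game point by point then gives `tp M + tp (C ∩ (-∞, d)) = tp (-∞, d)`. A final segment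
of `A` already absorbs `tp M` on its right when `M ≡ A`, so in `A + B + A` the segment of `B` below
`d` can be cut down to `C`, and dually for the segment above. As only end segments of the summands
are involved, finitely many marked points of `A` and `C` do no harm, and the embedding is
elementary by the Tarski–Vaught test.
-/

universe u v

/-- Codes for the `n`-round Ehrenfeucht–Fraïssé types of linear orders colored by `K`. A code of
rank `n + 1` is a set of triples, one for each point of the order: its color and the codes of
rank `n` of the parts below and above it. -/
def OrderTy (K : Type u) : ℕ → Type u
  | 0 => PUnit
  | n + 1 => Set (K × OrderTy K n × OrderTy K n)

namespace OrderTy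

variable {K : Type u} {K' : Type v} {n : ℕ}

instance : Subsingleton (OrderTy K 0) := inferInstanceAs (Subsingleton PUnit)

instance [Finite K] (n : ℕ) : Finite (OrderTy K n) := by
  induction n with
  | zero => exact inferInstanceAs (Finite PUnit)
  | succ n ih => exact inferInstanceAs (Finite (Set (K × OrderTy K n × OrderTy K n)))

/-- The set of triples which a code of positive rank consists of. -/
def elems (s : OrderTy K (n + 1)) : Set (K × OrderTy K n × OrderTy K n) := s

theorem elems_injective :
    Function.Injective (elems : OrderTy K (n + 1) → Set (K × OrderTy K n × OrderTy K n)) :=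
  Function.injective_id

/-- The code of rank `n` determined by a code of rank `n + 1`, forgetting one round. -/
def trunc : ∀ {n : ℕ}, OrderTy K (n + 1) → OrderTy K n
  | 0, _ => PUnit.unit
  | _ + 1, s => (fun p => (p.1, trunc p.2.1, trunc p.2.2)) '' elems s

/-- The code of the sum of two orders with given codes; this is the addition of `OrderTy K n`. -/
protected def add : ∀ {n : ℕ}, OrderTy K n → OrderTy K n → OrderTy K n
  | 0, _, _ => PUnit.unit
  | _ + 1, s, t => ((fun p => (p.1, p.2.1, OrderTy.add p.2.2 (trunc t))) '' elems s ∪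
      (fun p => (p.1, OrderTy.add (trunc s) p.2.1, p.2.2)) '' elems t : Set (K × _ × _))

/-- The code of the reverse of an order with the given code. -/
def rev : ∀ {n : ℕ}, OrderTy K n → OrderTy K n
  | 0, _ => PUnit.unit
  | _ + 1, s => (fun p => (p.1, rev p.2.2, rev p.2.1)) '' elems s

/-- The code of an order with the given code, recolored along `f`. -/
def map (f : K → K') : ∀ {n : ℕ}, OrderTy K n → OrderTy K' n
  | 0, _ => PUnit.unit
  | _ + 1, s => (fun p => (f p.1, map f p.2.1, map f p.2.2)) '' elems s

instance : Add (OrderTy K n) := ⟨OrderTy.add⟩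

theorem elems_trunc (s : OrderTy K (n + 2)) :
    s.trunc.elems = (fun p => (p.1, p.2.1.trunc, p.2.2.trunc)) '' s.elems := rfl

theorem elems_add (s t : OrderTy K (n + 1)) :
    (s + t).elems = (fun p => (p.1, p.2.1, p.2.2 + t.trunc)) '' s.elems ∪
      (fun p => (p.1, s.trunc + p.2.1, p.2.2)) '' t.elems := rfl

theorem elems_rev (s : OrderTy K (n + 1)) :
    s.rev.elems = (fun p => (p.1, p.2.2.rev, p.2.1.rev)) '' s.elems := rfl

theorem elems_map (f : K → K') (s : OrderTy K (n + 1)) :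
    (s.map f).elems = (fun p => (f p.1, p.2.1.map f, p.2.2.map f)) '' s.elems := rfl

theorem trunc_add (s t : OrderTy K (n + 1)) : (s + t).trunc = s.trunc + t.trunc := by
  induction n with
  | zero => rfl
  | succ n ih =>
    apply elems_injective
    simp only [elems_trunc, elems_add, image_union, image_image, ih]

instance : AddSemigroup (OrderTy K n) where
  add_assoc s t u := by
    induction n with
    | zero => rfl
    | succ n ih =>
      apply elems_injective
      simp only [elems_add, image_union, image_image, trunc_add, ih, union_assoc]

theorem trunc_map (f : K → K') (s : OrderTy K (n + 1)) : (s.map f).trunc = s.trunc.map f := by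
  induction n with
  | zero => rfl
  | succ n ih =>
    apply elems_injective
    simp only [elems_trunc, elems_map, image_image, ih]

theorem map_add (f : K → K') (s t : OrderTy K n) : (s + t).map f = s.map f + t.map f := by
  induction n with
  | zero => rfl
  | succ n ih =>
    apply elems_injective
    simp only [elems_map, elems_add, image_union, image_image, trunc_map, ih]

theorem trunc_rev (s : OrderTy K (n + 1)) : s.rev.trunc = s.trunc.rev := by
  induction n with
  | zero => rfl
  | succ n ih =>
    apply elems_injective
    simp only [elems_trunc, elems_rev, image_image, ih]

theorem rev_add (s t : OrderTy K n) : (s + t).rev = t.rev + s.rev := by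
  induction n with
  | zero => rfl
  | succ n ih =>
    apply elems_injective
    simp only [elems_rev, elems_add, image_union, image_image, trunc_rev, ih]
    exact union_comm _ _

theorem rev_rev (s : OrderTy K n) : s.rev.rev = s := by
  induction n with
  | zero => rfl
  | succ n ih =>
    apply elems_injective
    simp only [elems_rev, image_image, ih, Prod.mk.eta, image_id']

theorem rev_injective : Function.Injective (rev : OrderTy K n → OrderTy K n) :=
  Function.LeftInverse.injective rev_rev

end OrderTy

section OrderType

variable {M N : Type*} {K : Type u} {K' : Type v} [LinearOrder M] [LinearOrder N] {n : ℕ}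

/-- The rank `n` type of a subset `S` of a linear order colored by `col`. -/
def orderTy (col : M → K) : (n : ℕ) → Set M → OrderTy K n
  | 0, _ => PUnit.unit
  | n + 1, S => (fun x => (col x, orderTy col n (S ∩ Iio x), orderTy col n (S ∩ Ioi x))) '' S

/-- The color of `x` together with the rank `n` types of the parts of `S` below and above `x`. -/
def pointTy (col : M → K) (n : ℕ) (S : Set M) (x : M) : K × OrderTy K n × OrderTy K n :=
  (col x, orderTy col n (S ∩ Iio x), orderTy col n (S ∩ Ioi x))

theorem elems_orderTy (col : M → K) (n : ℕ) (S : Set M) :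
    (orderTy col (n + 1) S).elems = pointTy col n S '' S := rfl

theorem exists_pointTy_eq_of_orderTy_eq {col : M → K} {col' : N → K} {S : Set M} {T : Set N}
    (h : orderTy col (n + 1) S = orderTy col' (n + 1) T) {x : M} (hx : x ∈ S) :
    ∃ y ∈ T, pointTy col' n T y = pointTy col n S x := by
  have hmem : pointTy col n S x ∈ (orderTy col (n + 1) S).elems := ⟨x, hx, rfl⟩
  rwa [h] at hmem

theorem trunc_orderTy (col : M → K) (n : ℕ) (S : Set M) :
    (orderTy col (n + 1) S).trunc = orderTy col n S := by
  induction n generalizing S with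
  | zero => rfl
  | succ n ih =>
    apply OrderTy.elems_injective
    rw [OrderTy.elems_trunc, elems_orderTy, elems_orderTy, image_image]
    exact image_congr fun x _ => by simp only [pointTy, ih]

theorem elems_orderTy_add (col : M → K) (col' : N → K) (n : ℕ) (S : Set M) (T : Set N) :
    (orderTy col (n + 1) S + orderTy col' (n + 1) T).elems =
      (fun x => (col x, orderTy col n (S ∩ Iio x),
        orderTy col n (S ∩ Ioi x) + orderTy col' n T)) '' S ∪
      (fun x => (col' x, orderTy col n S + orderTy col' n (T ∩ Iio x),
        orderTy col' n (T ∩ Ioi x))) '' T := by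
  simp only [OrderTy.elems_add, trunc_orderTy, elems_orderTy, image_image, pointTy]

theorem orderTy_union (col : M → K) (n : ℕ) {S T : Set M} (h : ∀ x ∈ S, ∀ y ∈ T, x < y) :
    orderTy col n (S ∪ T) = orderTy col n S + orderTy col n T := by
  induction n generalizing S T with
  | zero => rfl
  | succ n ih =>
    apply OrderTy.elems_injective
    rw [elems_orderTy_add, elems_orderTy, image_union]
    refine congrArg₂ _ (image_congr fun x hx => ?_) (image_congr fun x hx => ?_)
    · have hlo : (S ∪ T) ∩ Iio x = S ∩ Iio x := by grind
      have hhi : (S ∪ T) ∩ Ioi x = (S ∩ Ioi x) ∪ T := by grind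
      rw [pointTy, hlo, hhi, ih fun y hy => h y hy.1]
    · have hlo : (S ∪ T) ∩ Iio x = S ∪ (T ∩ Iio x) := by grind
      have hhi : (S ∪ T) ∩ Ioi x = T ∩ Ioi x := by grind
      rw [pointTy, hlo, hhi, ih fun y hy z hz => h y hy z hz.1]

theorem orderTy_congr {col col' : M → K} {S : Set M} (h : EqOn col col' S) (n : ℕ) :
    orderTy col n S = orderTy col' n S := by
  induction n generalizing S with
  | zero => rfl
  | succ n ih =>
    refine image_congr fun x hx => ?_
    rw [h hx, ih fun y hy => h hy.1, ih fun y hy => h hy.1]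

theorem orderTy_comp (f : K → K') (col : M → K) (n : ℕ) (S : Set M) :
    orderTy (f ∘ col) n S = (orderTy col n S).map f := by
  induction n generalizing S with
  | zero => rfl
  | succ n ih =>
    apply OrderTy.elems_injective
    rw [OrderTy.elems_map, elems_orderTy, elems_orderTy, image_image]
    exact image_congr fun x _ => by simp only [pointTy, ih, Function.comp_apply]

theorem orderTy_eq_map_of_eqOn {col' : M → K'} {f : K → K'} {col : M → K} {S : Set M}
    (h : EqOn col' (f ∘ col) S) (n : ℕ) : orderTy col' n S = (orderTy col n S).map f :=
  (orderTy_congr h n).trans (orderTy_comp f col n S)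

theorem orderTy_image (col : N → K) {g : M → N} (hg : StrictMono g) (n : ℕ) (S : Set M) :
    orderTy col n (g '' S) = orderTy (col ∘ g) n S := by
  induction n generalizing S with
  | zero => rfl
  | succ n ih =>
    apply OrderTy.elems_injective
    rw [elems_orderTy, elems_orderTy, image_image]
    refine image_congr fun x _ => ?_
    have hlo : g ⁻¹' Iio (g x) = Iio x := Set.ext fun _ => hg.lt_iff_lt
    have hhi : g ⁻¹' Ioi (g x) = Ioi x := Set.ext fun _ => hg.lt_iff_lt
    simp only [pointTy, ← image_inter_preimage, hlo, hhi, ih, Function.comp_apply]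

theorem orderTy_singleton (col : M → K) (n : ℕ) (x : M) :
    orderTy col n {x} = orderTy (fun _ : Unit => col x) n univ := by
  rw [← show (fun _ : Unit => x) '' univ = {x} by simp,
    orderTy_image col (Subsingleton.strictMono _)]
  rfl

theorem orderTy_orderDual (col : M → K) (n : ℕ) (S : Set M) :
    orderTy (col ∘ OrderDual.ofDual) n (OrderDual.ofDual ⁻¹' S) =
      OrderTy.rev (orderTy col n S) := by
  induction n generalizing S with
  | zero => rfl
  | succ n ih =>
    apply OrderTy.elems_injective
    rw [OrderTy.elems_rev, elems_orderTy col, image_image]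
    simp only [pointTy, ← ih]
    rfl

theorem orderTy_univ_eq_Iio_add (col : M → K) (n : ℕ) (x : M) :
    orderTy col n univ = orderTy col n (Iio x) + orderTy col n {x} + orderTy col n (Ioi x) := by
  rw [← orderTy_union col n (by grind), Iio_union_right, ← orderTy_union col n (by grind),
    Iic_union_Ioi]

theorem orderTy_univ_eq_Iio_add_Ici (col : M → K) (n : ℕ) (c : M) :
    orderTy col n univ = orderTy col n (Iio c) + orderTy col n (Ici c) := by
  rw [← orderTy_union (S := Iio c) (T := Ici c) _ _ fun x hx y hy => lt_of_lt_of_le hx hy,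
    Iio_union_Ici]

theorem orderTy_univ_eq_Iic_add (col : M → K) (n : ℕ) (b : M) :
    orderTy col n univ = orderTy col n (Iic b) + orderTy col n (Ioi b) := by
  rw [← orderTy_union (S := Iic b) (T := Ioi b) _ _ fun x hx y hy => lt_of_le_of_lt hx hy,
    Iic_union_Ioi]

theorem orderTy_Iio_eq_Iic_add (col : M → K) (n : ℕ) {b c : M} (h : b < c) :
    orderTy col n (Iio c) = orderTy col n (Iic b) + orderTy col n (Ioo b c) := by
  rw [← orderTy_union (S := Iic b) _ _ fun x hx y hy => lt_of_le_of_lt hx hy.1,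
    Iic_union_Ioo_eq_Iio h]

theorem orderTy_Iio_eq_add_Ico (col : M → K) (n : ℕ) {b c : M} (h : b ≤ c) :
    orderTy col n (Iio c) = orderTy col n (Iio b) + orderTy col n (Ico b c) := by
  rw [← orderTy_union (S := Iio b) _ _ fun x hx y hy => lt_of_lt_of_le hx hy.1,
    Iio_union_Ico_eq_Iio h]

theorem orderTy_Ioo_eq_add_Ico (col : M → K) (n : ℕ) {a b c : M} (h : a < b) (h' : b ≤ c) :
    orderTy col n (Ioo a c) = orderTy col n (Ioo a b) + orderTy col n (Ico b c) := by
  rw [← orderTy_union _ _ fun x hx y hy => lt_of_lt_of_le hx.2 hy.1, Ioo_union_Ico_eq_Ioo h h']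

theorem orderTy_Ioo_eq_Ioc_add (col : M → K) (n : ℕ) {a b c : M} (h : a ≤ b) (h' : b < c) :
    orderTy col n (Ioo a c) = orderTy col n (Ioc a b) + orderTy col n (Ioo b c) := by
  rw [← orderTy_union _ _ fun x hx y hy => lt_of_le_of_lt hx.2 hy.1, Ioc_union_Ioo_eq_Ioo h h']

theorem orderTy_eq_inter_Iio_add_Icc_add (col : M → K) (n : ℕ) {S : Set M} {a b : M} (h : a ≤ b)
    (hS : Icc a b ⊆ S) :
    orderTy col n S = orderTy col n (S ∩ Iio a) + orderTy col n (Icc a b) +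
      orderTy col n (S ∩ Ioi b) := by
  have hset : S = S ∩ Iio a ∪ Icc a b ∪ S ∩ Ioi b := by
    ext x
    have := @hS x
    grind
  rw [← orderTy_union _ _ (by grind), ← orderTy_union _ _ (by grind), ← hset]

end OrderType

section UniformDefinability

variable {ι α : Type} {β γ : Type*}

/-- A family of predicates on the tuples of every CLO which is defined by a single formula. It is
closed under the logical operations and lets one avoid writing formulas down. -/
def UniformDef (P : ∀ (M : Type) [LinearOrder M], (ι → Set M) → (α → M) → Prop) : Prop :=
  ∃ φ : (CLOLang ι).Formula α, ∀ (M : Type) [LinearOrder M] (c : ι → Set M) (v : α → M),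
    Sat M c φ v ↔ P M c v

/-- A family of subsets of every CLO which is defined by a single formula with parameters `v`. The
variable `none` stands for the element of the set. -/
def UniformDefSet (S : ∀ (M : Type) [LinearOrder M], (ι → Set M) → (α → M) → Set M) : Prop :=
  UniformDef fun M _ c (w : Option α → M) => w none ∈ S M c fun i => w (some i)

/-- A family of maps on the tuples of every CLO each of whose fibers is defined by a single
formula. -/
def UniformDefMap (f : ∀ (M : Type) [LinearOrder M], (ι → Set M) → (α → M) → β) : Prop :=
  ∀ t, UniformDef fun M _ c v => f M c v = t

namespace UniformDef

variable {P Q : ∀ (M : Type) [LinearOrder M], (ι → Set M) → (α → M) → Prop}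

theorem sat (φ : (CLOLang ι).Formula α) : UniformDef fun M _ c v => Sat M c φ v :=
  ⟨φ, fun _ _ _ _ => Iff.rfl⟩

theorem congr (h : UniformDef P)
    (hPQ : ∀ (M : Type) [LinearOrder M] (c : ι → Set M) (v : α → M), P M c v ↔ Q M c v) :
    UniformDef Q :=
  h.imp fun _ hφ M _ c v => (hφ M c v).trans (hPQ M c v)

theorem not (h : UniformDef P) : UniformDef fun M _ c v => ¬ P M c v := by
  obtain ⟨φ, hφ⟩ := h
  exact ⟨φ.not, fun M _ c v => let := CLOStr ι M c
    Formula.realize_not.trans (not_congr (hφ M c v))⟩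

theorem and (h : UniformDef P) (h' : UniformDef Q) :
    UniformDef fun M _ c v => P M c v ∧ Q M c v := by
  obtain ⟨φ, hφ⟩ := h
  obtain ⟨ψ, hψ⟩ := h'
  exact ⟨φ ⊓ ψ, fun M _ c v => let := CLOStr ι M c
    Formula.realize_inf.trans (and_congr (hφ M c v) (hψ M c v))⟩

theorem imp (h : UniformDef P) (h' : UniformDef Q) :
    UniformDef fun M _ c v => P M c v → Q M c v :=
  (h.and h'.not).not.congr fun _ _ _ _ => not_and_not_right

theorem or (h : UniformDef P) (h' : UniformDef Q) :
    UniformDef fun M _ c v => P M c v ∨ Q M c v :=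
  (h.not.imp h').congr fun _ _ _ _ => or_iff_not_imp_left.symm

theorem const (p : Prop) : UniformDef fun M _ (_ : ι → Set M) (_ : α → M) => p := by
  by_cases hp : p
  · exact ⟨⊤, fun M _ c _ => let := CLOStr ι M c
      iff_of_true (Formula.realize_top.2 trivial) hp⟩
  · exact ⟨⊥, fun M _ c _ => let := CLOStr ι M c
      iff_of_false Formula.realize_bot.1 hp⟩

theorem lt (i j : α) : UniformDef fun M _ (_ : ι → Set M) v => v i < v j :=
  ⟨Relations.formula₂ (L := CLOLang ι) (CLORel.lt : CLORel ι 2) (Term.var i) (Term.var j),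
    fun M _ c _ => let := CLOStr ι M c
    Formula.realize_rel₂⟩

theorem le (i j : α) : UniformDef fun M _ (_ : ι → Set M) v => v i ≤ v j :=
  (lt j i).not.congr fun _ _ _ _ => not_lt

theorem color (k : ι) (i : α) : UniformDef fun M _ (c : ι → Set M) v => v i ∈ c k :=
  ⟨Relations.formula₁ (L := CLOLang ι) (CLORel.color k : CLORel ι 1) (Term.var i),
    fun M _ c _ => let := CLOStr ι M c
    Formula.realize_rel₁⟩

theorem reindex {α' : Type} (h : UniformDef P) (f : α → α') :
    UniformDef fun M _ c (v : α' → M) => P M c fun i => v (f i) := by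
  obtain ⟨φ, hφ⟩ := h
  exact ⟨φ.relabel f, fun M _ c v => let := CLOStr ι M c
    Formula.realize_relabel.trans (hφ M c _)⟩

theorem exists_elem {P : ∀ (M : Type) [LinearOrder M], (ι → Set M) → (α → M) → M → Prop}
    (h : UniformDef fun M _ c (w : Option α → M) => P M c (fun i => w (some i)) (w none)) :
    UniformDef fun M _ c v => ∃ x, P M c v x := by
  obtain ⟨φ, hφ⟩ := h.reindex fun o : Option α => o.elim (Sum.inr ()) Sum.inl
  refine ⟨φ.iExs Unit, fun M _ c v => ?_⟩
  let := CLOStr ι M c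
  refine Formula.realize_iExs.trans ⟨?_, ?_⟩
  · rintro ⟨x, hx⟩
    exact ⟨x (), (hφ M c _).1 hx⟩
  · rintro ⟨x, hx⟩
    exact ⟨fun _ => x, (hφ M c (Sum.elim v fun _ => x)).2 hx⟩

theorem forall_elem {P : ∀ (M : Type) [LinearOrder M], (ι → Set M) → (α → M) → M → Prop}
    (h : UniformDef fun M _ c (w : Option α → M) => P M c (fun i => w (some i)) (w none)) :
    UniformDef fun M _ c v => ∀ x, P M c v x :=
  (exists_elem (P := fun M _ c v x => ¬ P M c v x) h.not).not.congr fun _ _ _ _ =>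
    not_exists_not

theorem forall_finite [Finite β]
    {P : β → ∀ (M : Type) [LinearOrder M], (ι → Set M) → (α → M) → Prop}
    (h : ∀ i, UniformDef (P i)) : UniformDef fun M _ c v => ∀ i, P i M c v := by
  choose φ hφ using h
  exact ⟨Formula.iInf φ, fun M _ c v => let := CLOStr ι M c
    Formula.realize_iInf.trans (forall_congr' fun i => hφ i M c v)⟩

end UniformDef

namespace UniformDefMap

theorem of_mem [Finite β]
    {f : ∀ (M : Type) [LinearOrder M], (ι → Set M) → (α → M) → Set β}
    (h : ∀ q, UniformDef fun M _ c v => q ∈ f M c v) : UniformDefMap f := fun t => by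
  refine (UniformDef.forall_finite fun q => ?_).congr fun M _ c v => Set.ext_iff.symm
  exact ((h q).imp (.const (q ∈ t))).and ((UniformDef.const (q ∈ t)).imp (h q)) |>.congr
    fun _ _ _ _ => iff_def.symm

theorem prodMk {f : ∀ (M : Type) [LinearOrder M], (ι → Set M) → (α → M) → β}
    {g : ∀ (M : Type) [LinearOrder M], (ι → Set M) → (α → M) → γ}
    (hf : UniformDefMap f) (hg : UniformDefMap g) :
    UniformDefMap fun M _ c v => (f M c v, g M c v) := fun t =>
  ((hf t.1).and (hg t.2)).congr fun _ _ _ _ => by rw [Prod.ext_iff]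

theorem pred [Finite β] {f : ∀ (M : Type) [LinearOrder M], (ι → Set M) → (α → M) → β}
    (h : UniformDefMap f) (p : β → Prop) : UniformDef fun M _ c v => p (f M c v) :=
  (UniformDef.forall_finite fun t => (h t).imp (.const (p t))).congr fun _ _ _ _ => forall_eq'

end UniformDefMap

/-- The color of a point, recording the colors in the finite set `F` only, so that there are
finitely many types of each rank. -/
def finColor (F : Finset ι) {M : Type*} (c : ι → Set M) (x : M) : Set F :=
  {i | x ∈ c i}

theorem uniformDefMap_finColor (F : Finset ι) (i : α) :
    UniformDefMap fun M _ (c : ι → Set M) v => finColor F c (v i) :=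
  .of_mem fun k => .color (k : ι) i

namespace UniformDefSet

variable {S T : ∀ (M : Type) [LinearOrder M], (ι → Set M) → (α → M) → Set M}

theorem univ : UniformDefSet fun M _ (_ : ι → Set M) (_ : α → M) => Set.univ :=
  (UniformDef.const True).congr fun _ _ _ _ => iff_of_true trivial trivial

theorem Iio (i : α) : UniformDefSet fun M _ (_ : ι → Set M) v => Set.Iio (v i) :=
  .lt none (some i)

theorem Ioi (i : α) : UniformDefSet fun M _ (_ : ι → Set M) v => Set.Ioi (v i) :=
  .lt (some i) none

theorem inter (hS : UniformDefSet S) (hT : UniformDefSet T) :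
    UniformDefSet fun M _ c v => S M c v ∩ T M c v :=
  UniformDef.and hS hT

theorem reindex {α' : Type} (hS : UniformDefSet S) (f : α → α') :
    UniformDefSet fun M _ c (v : α' → M) => S M c fun i => v (f i) :=
  UniformDef.reindex hS (Option.map f)

theorem orderTy (hS : UniformDefSet S) (F : Finset ι) (n : ℕ) :
    UniformDefMap fun M _ c v => orderTy (finColor F c) n (S M c v) := by
  induction n generalizing α with
  | zero => exact fun _ => (UniformDef.const True).congr fun _ _ _ _ => iff_of_true trivial rfl
  | succ n ih =>
    have hpoint : UniformDefMap fun M _ c (w : Option α → M) =>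
        pointTy (finColor F c) n (S M c fun i => w (some i)) (w none) :=
      .prodMk (uniformDefMap_finColor F none) <|
        .prodMk (ih ((hS.reindex some).inter (Iio none))) (ih ((hS.reindex some).inter (Ioi none)))
    exact .of_mem fun q => .exists_elem (P := fun M _ c v x =>
      x ∈ S M c v ∧ pointTy (finColor F c) n (S M c v) x = q) (hS.and (hpoint q))

theorem pointTy (hS : UniformDefSet S) (F : Finset ι) (n : ℕ) (i : α) :
    UniformDefMap fun M _ c v => pointTy (finColor F c) n (S M c v) (v i) :=
  .prodMk (uniformDefMap_finColor F i) <|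
    .prodMk ((hS.inter (Iio i)).orderTy F n) ((hS.inter (Ioi i)).orderTy F n)

end UniformDefSet

end UniformDefinability

section Tuples

variable {ι β γ : Type} {M N : Type} [LinearOrder M] [LinearOrder N] {F : Finset ι} {n : ℕ}
  {cM : ι → Set M} {cN : ι → Set N}

/-- The color of a point, recording the colors in `F` and the positions at which the point occurs
in the tuple `w`. Thus the types in this color are types over the parameters `w`. -/
def markCol (F : Finset ι) (c : ι → Set M) (w : β → M) (x : M) : Set F × Set β :=
  (finColor F c x, {j | w j = x})

theorem mem_range_iff_exists_mem_elems (c : ι → Set M) (w : β → M) (S : Set M) (i : β) :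
    w i ∈ S ↔ ∃ q ∈ (orderTy (markCol F c w) (n + 1) S).elems, i ∈ q.1.2 := by
  refine ⟨fun h => ⟨_, ⟨w i, h, rfl⟩, rfl⟩, ?_⟩
  rintro ⟨_, ⟨x, hx, rfl⟩, rfl : w i = x⟩
  exact hx

theorem markCol_ne_iff {c : ι → Set M} {w : β → M} {x : M} :
    markCol F c w x ≠ (finColor F c x, ∅) ↔ x ∈ range w := by
  simp [markCol, Set.ext_iff]

theorem finite_setOf_markCol_ne [Finite β] {e : γ → M} (he : Function.Injective e)
    (c : ι → Set M) (w : β → M) : {x | markCol F c w (e x) ≠ (finColor F c (e x), ∅)}.Finite := by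
  simp only [markCol_ne_iff]
  exact (finite_range w).preimage he.injOn

theorem orderTy_markCol_optionElim (c : ι → Set M) (w : β → M) (x : M) :
    orderTy (markCol F c fun o : Option β => o.elim x w) n univ =
      (orderTy (markCol F c w) n (Iio x)).map (Prod.map id (some '' ·)) +
        orderTy (fun _ : Unit => Prod.map id (insert none <| some '' ·) (markCol F c w x)) n univ +
        (orderTy (markCol F c w) n (Ioi x)).map (Prod.map id (some '' ·)) := by
  have hoff (y : M) (hy : y ≠ x) : markCol F c (fun o : Option β => o.elim x w) y =
      Prod.map id (some '' ·) (markCol F c w y) := by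
    refine Prod.ext rfl (Set.ext fun o => ?_)
    cases o <;> simp [markCol, hy.symm]
  have hat : markCol F c (fun o : Option β => o.elim x w) x =
      Prod.map id (insert none <| some '' ·) (markCol F c w x) := by
    refine Prod.ext rfl (Set.ext fun o => ?_)
    cases o <;> simp [markCol]
  rw [orderTy_univ_eq_Iio_add _ n x, orderTy_singleton, hat, ← orderTy_comp, ← orderTy_comp,
    orderTy_congr (S := Iio x) fun y hy => hoff y (ne_of_lt hy),
    orderTy_congr (S := Ioi x) fun y hy => hoff y (ne_of_gt hy)]
  rfl

/-- The tuples `w` and `w'` of two CLOs have the same type of rank `n` in the colors of `F`. -/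
def TupleEquiv (F : Finset ι) (n : ℕ) (cM : ι → Set M) (w : β → M) (cN : ι → Set N)
    (w' : β → N) : Prop :=
  orderTy (markCol F cM w) n univ = orderTy (markCol F cN w') n univ

namespace TupleEquiv

variable {w : β → M} {w' : β → N}

theorem symm (h : TupleEquiv F n cM w cN w') : TupleEquiv F n cN w' cM w :=
  Eq.symm h

theorem comp (h : TupleEquiv F n cM w cN w') (e : γ → β) :
    TupleEquiv F n cM (w ∘ e) cN (w' ∘ e) := by
  have hM : markCol F cM (w ∘ e) = Prod.map id (e ⁻¹' ·) ∘ markCol F cM w := rfl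
  have hN : markCol F cN (w' ∘ e) = Prod.map id (e ⁻¹' ·) ∘ markCol F cN w' := rfl
  rw [TupleEquiv, hM, hN, orderTy_comp, orderTy_comp, h]

theorem pointTy_eq (h : TupleEquiv F (n + 1) cM w cN w') (j : β) :
    pointTy (markCol F cM w) n univ (w j) = pointTy (markCol F cN w') n univ (w' j) := by
  obtain ⟨y, -, hy⟩ := exists_pointTy_eq_of_orderTy_eq h (mem_univ (w j))
  have hj : w' j = y := (Set.ext_iff.1 (congrArg (fun q => q.1.2) hy) j).2 rfl
  rw [← hy, hj]

theorem eq_iff (h : TupleEquiv F (n + 1) cM w cN w') (i j : β) : w i = w j ↔ w' i = w' j :=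
  Set.ext_iff.1 (congrArg (fun q => q.1.2) (h.pointTy_eq j)) i

theorem color_iff (h : TupleEquiv F (n + 1) cM w cN w') {k : ι} (hk : k ∈ F) (j : β) :
    w j ∈ cM k ↔ w' j ∈ cN k :=
  Set.ext_iff.1 (congrArg (fun q => q.1.1) (h.pointTy_eq j)) ⟨k, hk⟩

theorem lt_iff (h : TupleEquiv F (n + 2) cM w cN w') (i j : β) : w i < w j ↔ w' i < w' j := by
  have hlo : orderTy (markCol F cM w) (n + 1) (univ ∩ Iio (w j)) =
      orderTy (markCol F cN w') (n + 1) (univ ∩ Iio (w' j)) :=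
    congrArg (fun q => q.2.1) (h.pointTy_eq j)
  rw [univ_inter, univ_inter] at hlo
  rw [← mem_Iio, ← mem_Iio, mem_range_iff_exists_mem_elems (F := F) (n := n) cM, hlo,
    ← mem_range_iff_exists_mem_elems]

theorem exists_optionElim (h : TupleEquiv F (n + 1) cM w cN w') (x : M) :
    ∃ y, TupleEquiv F n cM (fun o : Option β => o.elim x w) cN
      (fun o : Option β => o.elim y w') := by
  obtain ⟨y, -, hy⟩ := exists_pointTy_eq_of_orderTy_eq h (mem_univ x)
  simp only [pointTy, univ_inter, Prod.mk.injEq] at hy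
  obtain ⟨hcol, hlo, hhi⟩ := hy
  exact ⟨y, by rw [TupleEquiv, orderTy_markCol_optionElim, orderTy_markCol_optionElim, hcol, hlo,
    hhi]⟩

theorem exists_snoc {α : Type} {k : ℕ} {v : α → M} {xs : Fin k → M} {v' : α → N}
    {xs' : Fin k → N} (h : TupleEquiv F (n + 1) cM (Sum.elim v xs) cN (Sum.elim v' xs')) (x : M) :
    ∃ y, TupleEquiv F n cM (Sum.elim v (Fin.snoc xs x : Fin (k + 1) → M)) cN
      (Sum.elim v' (Fin.snoc xs' y : Fin (k + 1) → N)) := by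
  obtain ⟨y, hy⟩ := h.exists_optionElim x
  let e : α ⊕ Fin (k + 1) → Option (α ⊕ Fin k) :=
    Sum.elim (some ∘ Sum.inl) (Fin.snoc (α := fun _ => _) (some ∘ Sum.inr) none)
  have he {L : Type} (u : α → L) (us : Fin k → L) (z : L) :
      Sum.elim u (Fin.snoc us z : Fin (k + 1) → L) =
        (fun o : Option (α ⊕ Fin k) => o.elim z (Sum.elim u us)) ∘ e := by
    ext (a | j)
    · rfl
    · cases j using Fin.lastCases <;> simp [e]
  exact ⟨y, by rw [he, he]; exact hy.comp e⟩

end TupleEquiv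

/-- The formula `φ` cannot distinguish two tuples with the same type of rank `m` in the colors
of `F`. -/
def TypeDetermined (F : Finset ι) (m : ℕ) {α : Type} {k : ℕ}
    (φ : (CLOLang ι).BoundedFormula α k) : Prop :=
  ∀ (M N : Type) [LinearOrder M] [LinearOrder N] (cM : ι → Set M) (cN : ι → Set N) (v : α → M)
    (v' : α → N) (xs : Fin k → M) (xs' : Fin k → N),
    TupleEquiv F m cM (Sum.elim v xs) cN (Sum.elim v' xs') →
      ((letI := CLOStr ι M cM; φ.Realize v xs) ↔ (letI := CLOStr ι N cN; φ.Realize v' xs'))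

namespace TypeDetermined

variable {α : Type} {k : ℕ}

theorem imp {φ ψ : (CLOLang ι).BoundedFormula α k} (hφ : TypeDetermined F n φ)
    (hψ : TypeDetermined F n ψ) : TypeDetermined F n (φ.imp ψ) :=
  fun M N _ _ cM cN v v' xs xs' h =>
    imp_congr (hφ M N cM cN v v' xs xs' h) (hψ M N cM cN v v' xs xs' h)

theorem all {φ : (CLOLang ι).BoundedFormula α (k + 1)} (hφ : TypeDetermined F n φ) :
    TypeDetermined F (n + 1) φ.all := by
  intro M N _ _ cM cN v v' xs xs' h
  constructor
  · intro hall y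
    obtain ⟨x, hx⟩ := h.symm.exists_snoc y
    exact (hφ N M cN cM _ _ _ _ hx).2 (hall x)
  · intro hall x
    obtain ⟨y, hy⟩ := h.exists_snoc x
    exact (hφ M N cM cN _ _ _ _ hy).2 (hall y)

theorem equal (t₁ t₂ : (CLOLang ι).Term (α ⊕ Fin k)) :
    TypeDetermined F (n + 1) (BoundedFormula.equal t₁ t₂) := by
  obtain i | f := t₁
  · obtain j | f := t₂
    · exact fun M N _ _ cM cN v v' xs xs' h => h.eq_iff i j
    · exact Empty.elim f
  · exact Empty.elim f

theorem rel {l : ℕ} (R : (CLOLang ι).Relations l) (ts : Fin l → (CLOLang ι).Term (α ⊕ Fin k)) :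
    ∃ F₀ : Finset ι, ∀ F ⊇ F₀, ∀ m, TypeDetermined F (m + 2) (BoundedFormula.rel R ts) := by
  have hvar (i : Fin l) : ∃ j, ts i = Term.var j := by
    rcases ts i with j | f
    · exact ⟨j, rfl⟩
    · exact Empty.elim f
  choose p hp using hvar
  obtain rfl : ts = fun i => Term.var (p i) := funext hp
  cases R with
  | lt => exact ⟨∅, fun F _ m M N _ _ cM cN v v' xs xs' h => h.lt_iff _ _⟩
  | color i =>
    exact ⟨{i}, fun F hF m M N _ _ cM cN v v' xs xs' h =>
      h.color_iff (hF (Finset.mem_singleton_self i)) _⟩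

end TypeDetermined

theorem exists_typeDetermined {α : Type} {k : ℕ} (φ : (CLOLang ι).BoundedFormula α k) :
    ∃ (F₀ : Finset ι) (m₀ : ℕ), ∀ F ⊇ F₀, ∀ m ≥ m₀, TypeDetermined F m φ := by
  classical
  induction φ with
  | falsum => exact ⟨∅, 0, fun _ _ _ _ _ _ _ _ _ _ _ _ _ _ _ => Iff.rfl⟩
  | equal t₁ t₂ =>
    refine ⟨∅, 1, fun F _ m hm => ?_⟩
    obtain ⟨m, rfl⟩ := Nat.exists_eq_add_of_le' hm
    exact .equal t₁ t₂
  | rel R ts =>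
    obtain ⟨F₀, h⟩ := TypeDetermined.rel R ts
    refine ⟨F₀, 2, fun F hF m hm => ?_⟩
    obtain ⟨m, rfl⟩ := Nat.exists_eq_add_of_le' hm
    exact h F hF m
  | imp φ ψ ihφ ihψ =>
    obtain ⟨F₁, m₁, h₁⟩ := ihφ
    obtain ⟨F₂, m₂, h₂⟩ := ihψ
    exact ⟨F₁ ∪ F₂, max m₁ m₂, fun F hF m hm =>
      (h₁ F (Finset.union_subset_left hF) m (le_of_max_le_left hm)).imp
        (h₂ F (Finset.union_subset_right hF) m (le_of_max_le_right hm))⟩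
  | all φ ih =>
    obtain ⟨F₀, m₀, h⟩ := ih
    refine ⟨F₀, m₀ + 1, fun F hF m hm => ?_⟩
    obtain ⟨m, rfl⟩ := Nat.exists_eq_add_of_le' (Nat.one_le_of_lt hm)
    exact (h F hF m (Nat.le_of_succ_le_succ hm)).all

/-- An Ehrenfeucht–Fraïssé form of the Tarski–Vaught test. -/
theorem isElemMap_of_orderTy_range {f : M → N} (hf : StrictMono f)
    (hc : ∀ i x, f x ∈ cN i ↔ x ∈ cM i)
    (h : ∀ (F : Finset ι) (n k : ℕ) (w : Fin k → M),
      orderTy (markCol F cN (f ∘ w)) n (range f) = orderTy (markCol F cN (f ∘ w)) n univ) :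
    IsElemMap ι cM cN f := by
  intro k φ v
  obtain ⟨F, m, hF⟩ := exists_typeDetermined φ
  have hmark : markCol F cN (f ∘ v) ∘ f = markCol F cM v := by
    ext x i
    · exact hc i x
    · exact hf.injective.eq_iff
  have hv : TupleEquiv F m cM v cN (f ∘ v) := by
    rw [TupleEquiv, ← h, ← image_univ, orderTy_image _ hf, hmark]
  have helim {L : Type} (u : Fin k → L) :
      Sum.elim u (default : Fin 0 → L) = u ∘ Sum.elim id Fin.elim0 := by
    ext (a | j)
    · rfl
    · exact j.elim0
  exact hF F subset_rfl m le_rfl M N cM cN v (f ∘ v) default default <| by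
    rw [helim, helim]; exact hv.comp _

end Tuples

section ElementaryEquivalence

variable {ι A B : Type} [LinearOrder A] [LinearOrder B] {cA : ι → Set A} {cB : ι → Set B}

namespace CLOEquiv

theorem symm (h : CLOEquiv ι A cA B cB) : CLOEquiv ι B cB A cA :=
  Eq.symm (α := (CLOLang ι).Theory) h

theorem orderTy_univ (h : CLOEquiv ι A cA B cB) (F : Finset ι) (n : ℕ) :
    orderTy (finColor F cA) n univ = orderTy (finColor F cB) n univ := by
  obtain ⟨φ, hφ⟩ := UniformDefSet.univ.orderTy (α := Empty) F n (orderTy (finColor F cB) n univ)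
  let := CLOStr ι A cA
  let := CLOStr ι B cB
  have hrealize : A ⊨ φ ↔ B ⊨ φ := ElementarilyEquivalent.realize_sentence h φ
  exact (hφ A cA default).1 (hrealize.2 ((hφ B cB default).2 rfl))

theorem exists_pointTy_eq (h : CLOEquiv ι A cA B cB) (F : Finset ι) (n : ℕ) (a : A) :
    ∃ b, pointTy (finColor F cB) n univ b = pointTy (finColor F cA) n univ a := by
  obtain ⟨b, -, hb⟩ := exists_pointTy_eq_of_orderTy_eq (h.orderTy_univ F (n + 1)) (mem_univ a)
  exact ⟨b, hb⟩

end CLOEquiv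

end ElementaryEquivalence

section AdditiveGap

variable {M : Type*} {K : Type u} [LinearOrder M] {col : M → K} {n : ℕ} {b c d l x : M}

theorem pointTy_Iio (h : x < d) :
    pointTy col n (Iio d) x = (col x, orderTy col n (Iio x), orderTy col n (Ioo x d)) := by
  rw [pointTy, Iio_inter_Iio, min_eq_right h.le, Iio_inter_Ioi]

theorem pointTy_Ioi (h : b < x) :
    pointTy col n (Ioi b) x = (col x, orderTy col n (Ioo b x), orderTy col n (Ioi x)) := by
  rw [pointTy, Ioi_inter_Ioi, max_eq_right h.le, Ioi_inter_Iio]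

theorem pointTy_Ioo (h : x ∈ Ioo b d) :
    pointTy col n (Ioo b d) x = (col x, orderTy col n (Ioo b x), orderTy col n (Ioo x d)) := by
  rw [pointTy, Ioo_inter_Iio, min_eq_right h.2.le, inter_comm, Ioi_inter_Ioo, max_eq_left h.1.le]

theorem pointTy_Ioi_eq_of_le {y : M} (hbl : b ≤ l) (hx : l < x) (hy : l < y)
    (h : pointTy col n (Ioi l) x = pointTy col n (Ioi l) y) :
    pointTy col n (Ioi b) x = pointTy col n (Ioi b) y := by
  simp only [pointTy_Ioi hx, pointTy_Ioi hy, Prod.mk.injEq] at h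
  obtain ⟨hcol, hlo, hhi⟩ := h
  rw [pointTy_Ioi (hbl.trans_lt hx), pointTy_Ioi (hbl.trans_lt hy),
    orderTy_Ioo_eq_Ioc_add col n hbl hx, orderTy_Ioo_eq_Ioc_add col n hbl hy, hcol, hlo, hhi]

theorem exists_forall_exists_mem_Ioc_pointTy_eq [Finite K] (col : M → K) (n : ℕ) (l : M) :
    ∃ z, ∀ b ≤ l, ∀ x > b, ∃ y ∈ Ioc b z, pointTy col n (Ioi b) y = pointTy col n (Ioi b) x := by
  have : Nonempty M := ⟨l⟩
  have hrep (τ : pointTy col n (Ioi l) '' Ioi l) : ∃ y > l, pointTy col n (Ioi l) y = τ := τ.2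
  choose rep hrep_gt hrep_eq using hrep
  obtain ⟨z, hz⟩ := Finite.exists_le rep
  refine ⟨max z l, fun b hb x hx => ?_⟩
  rcases le_or_gt x l with hxl | hxl
  · exact ⟨x, ⟨hx, hxl.trans (le_max_right z l)⟩, rfl⟩
  · let τ : pointTy col n (Ioi l) '' Ioi l := ⟨_, x, hxl, rfl⟩
    exact ⟨rep τ, ⟨hb.trans_lt (hrep_gt τ), (hz τ).trans (le_max_left z l)⟩,
      pointTy_Ioi_eq_of_le hb (hrep_gt τ) hxl (hrep_eq τ)⟩

/-- The interval `(b, c)` has the same type of rank `n` as the sum of the final segment above `b`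
and the initial segment below `c`: up to `n` rounds, it cannot be told apart from a gap which
splits a model in two. -/
def AdditiveGap (col : M → K) (n : ℕ) (b c : M) : Prop :=
  orderTy col n (Ioo b c) = orderTy col n (Ioi b) + orderTy col n (Iio c)

namespace AdditiveGap

theorem mono (h : AdditiveGap col n b c) (hbc : b < c) (hcd : c ≤ d) : AdditiveGap col n b d := by
  rw [AdditiveGap, orderTy_Ioo_eq_add_Ico col n hbc hcd, h, orderTy_Iio_eq_add_Ico col n hcd,
    add_assoc]

theorem pointTy_Ioo_left (h : AdditiveGap col n x d) (hx : x ∈ Ioo b d) :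
    pointTy col n (Ioo b d) x = ((pointTy col n (Ioi b) x).1, (pointTy col n (Ioi b) x).2.1,
      (pointTy col n (Ioi b) x).2.2 + orderTy col n (Iio d)) := by
  rw [pointTy_Ioo hx, pointTy_Ioi hx.1, h]

theorem pointTy_Ioo_right (h : AdditiveGap col n b x) (hx : x ∈ Ioo b d) :
    pointTy col n (Ioo b d) x = ((pointTy col n (Iio d) x).1,
      orderTy col n (Ioi b) + (pointTy col n (Iio d) x).2.1, (pointTy col n (Iio d) x).2.2) := by
  rw [pointTy_Ioo hx, pointTy_Iio hx.2, h]

theorem succ (hld : l < d) (hd : ∀ x ≤ l, AdditiveGap col n x d) (hb : AdditiveGap col n b l)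
    (hbl : b < l)
    (hleft : ∀ x > b, ∃ y ∈ Ioc b l, pointTy col n (Ioi b) y = pointTy col n (Ioi b) x)
    (hright : ∀ x < d, ∃ y ∈ Ioo b d, AdditiveGap col n b y ∧
      pointTy col n (Iio d) y = pointTy col n (Iio d) x) :
    AdditiveGap col (n + 1) b d := by
  apply OrderTy.elems_injective
  simp only [OrderTy.elems_add, trunc_orderTy, elems_orderTy, image_image]
  refine Subset.antisymm ?_ (union_subset ?_ ?_)
  · rintro _ ⟨x, hx, rfl⟩
    rcases le_or_gt x l with hxl | hxl
    · exact .inl ⟨x, hx.1, ((hd x hxl).pointTy_Ioo_left hx).symm⟩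
    · exact .inr ⟨x, hx.2, ((hb.mono hbl hxl.le).pointTy_Ioo_right hx).symm⟩
  · rintro _ ⟨x, hx, rfl⟩
    obtain ⟨y, hy, hyx⟩ := hleft x hx
    have hyd : y ∈ Ioo b d := ⟨hy.1, hy.2.trans_lt hld⟩
    exact ⟨y, hyd, by rw [(hd y hy.2).pointTy_Ioo_left hyd, hyx]⟩
  · rintro _ ⟨x, hx, rfl⟩
    obtain ⟨y, hy, hby, hyx⟩ := hright x hx
    exact ⟨y, hy, by rw [hby.pointTy_Ioo_right hy, hyx]⟩

end AdditiveGap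

end AdditiveGap

section SelfAdditive

variable {ι α M : Type} [LinearOrder M] {c : ι → Set M}

theorem uniformDef_additiveGap (F : Finset ι) (n : ℕ) (i j : α) :
    UniformDef fun M _ (c : ι → Set M) v => AdditiveGap (finColor F c) n (v i) (v j) :=
  (((UniformDefSet.Ioi i).inter (.Iio j)).orderTy F n |>.prodMk <|
    ((UniformDefSet.Ioi i).orderTy F n).prodMk ((UniformDefSet.Iio j).orderTy F n)).pred
      fun t => t.1 = t.2.1 + t.2.2

namespace SelfAdditive

theorem forall_of_exists {P : ∀ (M : Type) [LinearOrder M], (ι → Set M) → M → Prop}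
    (h : SelfAdditive ι M c) (hP : UniformDef fun M _ c (v : Unit → M) => P M c (v ()))
    (hconn : {x | P M c x}.OrdConnected) (hne : ∃ x, P M c x) (x : M) : P M c x := by
  obtain ⟨φ, hφ⟩ := hP
  have hset : FmlSet ι M c φ = {x | P M c x} := Set.ext fun y => hφ M c fun _ => y
  have huniv : {x | P M c x} = univ :=
    (hset ▸ h.2 φ (hset ▸ hconn)).resolve_left (Set.Nonempty.ne_empty hne)
  exact eq_univ_iff_forall.1 huniv x

theorem noMinOrder (h : SelfAdditive ι M c) : NoMinOrder M := by
  refine ⟨fun a => ?_⟩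
  by_contra! ha
  have hlower : IsLowerSet {x : M | ∀ y, x ≤ y} := fun _ _ hzx hx y => hzx.trans (hx y)
  have hbot : ∀ x y : M, x ≤ y := h.forall_of_exists (P := fun M _ _ x => ∀ y : M, x ≤ y)
    (.forall_elem <| .le (some ()) none) hlower.ordConnected ⟨a, ha⟩
  obtain ⟨x, y, hxy⟩ := h.1
  exact hxy (le_antisymm (hbot x y) (hbot y x))

theorem eventually_exists_pointTy_eq (h : SelfAdditive ι M c) (F : Finset ι) (n : ℕ) (l : M) :
    ∀ᶠ b in Filter.atBot, ∀ x > b, ∃ y ∈ Ioc b l,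
      pointTy (finColor F c) n (Ioi b) y = pointTy (finColor F c) n (Ioi b) x := by
  have : Nontrivial M := h.1
  let P (M : Type) [LinearOrder M] (c : ι → Set M) (z : M) : Prop :=
    ∃ m, ∀ b ≤ m, ∀ x > b, ∃ y, (b < y ∧ y ≤ z) ∧
      pointTy (finColor F c) n (Ioi b) y = pointTy (finColor F c) n (Ioi b) x
  have hP : UniformDef fun M _ c (v : Unit → M) => P M c (v ()) :=
    .exists_elem <| .forall_elem <| .imp (.le _ _) <| .forall_elem <| .imp (.lt _ _) <|
      .exists_elem <| .and (.and (.lt _ _) (.le _ _)) <|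
        (((UniformDefSet.Ioi _).pointTy F n _).prodMk
          ((UniformDefSet.Ioi _).pointTy F n _)).pred fun t => t.1 = t.2
  have hupper : IsUpperSet {z | P M c z} := fun z z' hz ⟨m, hm⟩ => ⟨m, fun b hb x hx =>
    (hm b hb x hx).imp fun _ hy => ⟨⟨hy.1.1, hy.1.2.trans hz⟩, hy.2⟩⟩
  obtain ⟨z, hz⟩ := exists_forall_exists_mem_Ioc_pointTy_eq (finColor F c) n l
  exact Filter.eventually_atBot.2 (h.forall_of_exists hP hupper.ordConnected ⟨z, l, hz⟩ l)

theorem eventually_additiveGap (h : SelfAdditive ι M c) (F : Finset ι) (n : ℕ) (d : M) :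
    ∀ᶠ b in Filter.atBot, AdditiveGap (finColor F c) n b d := by
  have := h.noMinOrder
  have := h.1
  induction n generalizing d with
  | zero => exact .of_forall fun _ => Subsingleton.elim _ _
  | succ n ih =>
    set col := finColor F c
    obtain ⟨l, hl⟩ := Filter.eventually_atBot.1 ((ih d).and (Filter.eventually_lt_atBot d))
    have hright : ∀ᶠ b in Filter.atBot, ∀ τ ∈ pointTy col n (Iio d) '' Iio d,
        ∃ y ∈ Ioo b d, AdditiveGap col n b y ∧ pointTy col n (Iio d) y = τ := by
      refine (Filter.eventually_all_finite (toFinite _)).2 ?_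
      rintro _ ⟨x, hx, rfl⟩
      filter_upwards [ih x, Filter.eventually_lt_atBot x] with b hgap hbx
      exact ⟨x, ⟨hbx, hx⟩, hgap, rfl⟩
    filter_upwards [ih l, Filter.eventually_lt_atBot l, h.eventually_exists_pointTy_eq F n l,
      hright] with b hb hbl hleft hright
    exact .succ (hl l le_rfl).2 (fun x hx => (hl x hx).1) hb hbl hleft
      fun x hx => hright _ ⟨x, hx, rfl⟩

theorem orderTy_univ_add_Iio (h : SelfAdditive ι M c) (F : Finset ι) (n : ℕ) (d : M) :
    orderTy (finColor F c) n univ + orderTy (finColor F c) n (Iio d) =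
      orderTy (finColor F c) n (Iio d) := by
  have := h.noMinOrder
  have := h.1
  obtain ⟨b, hgap, hbd⟩ := ((h.eventually_additiveGap F n d).and
    (Filter.eventually_lt_atBot d)).exists
  rw [orderTy_univ_eq_Iic_add _ n b, add_assoc, ← hgap, ← orderTy_Iio_eq_Iic_add _ n hbd]

theorem exists_le_pointTy_eq (h : SelfAdditive ι M c) (F : Finset ι) (n : ℕ) (x l : M) :
    ∃ y ≤ l, pointTy (finColor F c) n univ y = pointTy (finColor F c) n univ x := by
  let τ := pointTy (finColor F c) n univ x
  have hupper : IsUpperSet {l | ∃ y ≤ l, pointTy (finColor F c) n univ y = τ} :=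
    fun _ _ hl ⟨y, hy, hyτ⟩ => ⟨y, hy.trans hl, hyτ⟩
  exact h.forall_of_exists (P := fun M _ c l => ∃ y ≤ l, pointTy (finColor F c) n univ y = τ)
    (.exists_elem <| .and (.le _ _) (UniformDefSet.univ.pointTy F n none τ))
    hupper.ordConnected ⟨x, x, le_rfl, rfl⟩ l

end SelfAdditive

end SelfAdditive

section Duality

variable {ι α M : Type} [LinearOrder M] {c : ι → Set M}

/-- The colors of the reverse of a CLO. Reversal turns statements on initial segments into the dual
statements on final segments. -/
def dualColor (c : ι → Set M) : ι → Set Mᵒᵈ :=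
  fun i => OrderDual.ofDual ⁻¹' c i

theorem orderTy_dualColor (F : Finset ι) (n : ℕ) (S : Set M) :
    orderTy (finColor F (dualColor c)) n (OrderDual.ofDual ⁻¹' S) =
      (orderTy (finColor F c) n S).rev :=
  orderTy_orderDual (finColor F c) n S

/-- The formula which says in a CLO what the given formula says in its reverse: `Fin.rev` swaps the
arguments of `<` and fixes the single argument of a color. -/
def dualFormula : ∀ {k : ℕ}, (CLOLang ι).BoundedFormula α k → (CLOLang ι).BoundedFormula α k
  | _, .falsum => .falsum
  | _, .equal t₁ t₂ => .equal t₁ t₂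
  | _, .rel R ts => .rel R (ts ∘ Fin.rev)
  | _, .imp φ ψ => .imp (dualFormula φ) (dualFormula ψ)
  | _, .all φ => .all (dualFormula φ)

theorem realize_toDual_comp (c : ι → Set M) (w : α → M) (t : (CLOLang ι).Term α) :
    (letI := CLOStr ι Mᵒᵈ (dualColor c); t.realize (OrderDual.toDual ∘ w)) =
      OrderDual.toDual (letI := CLOStr ι M c; t.realize w) := by
  cases t with
  | var => rfl
  | func f => exact Empty.elim f

theorem realize_dualFormula (c : ι → Set M) {k : ℕ} (φ : (CLOLang ι).BoundedFormula α k)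
    (v : α → M) (xs : Fin k → M) :
    (letI := CLOStr ι M c; (dualFormula φ).Realize v xs) ↔
      (letI := CLOStr ι Mᵒᵈ (dualColor c);
        φ.Realize (OrderDual.toDual ∘ v) (OrderDual.toDual ∘ xs)) := by
  induction φ with
  | falsum => rfl
  | equal t₁ t₂ =>
    simp only [dualFormula, BoundedFormula.Realize, ← Sum.comp_elim, realize_toDual_comp,
      OrderDual.toDual_inj]
  | rel R ts =>
    simp only [dualFormula, BoundedFormula.Realize, ← Sum.comp_elim, realize_toDual_comp]
    cases R <;> rfl
  | imp φ ψ ihφ ihψ => exact imp_congr (ihφ xs) (ihψ xs)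
  | all φ ih =>
    refine OrderDual.toDual.forall_congr fun x => ?_
    rw [ih, Fin.comp_snoc]

theorem sat_dualFormula (c : ι → Set M) (φ : (CLOLang ι).Formula α) (v : α → M) :
    Sat M c (dualFormula φ) v ↔ Sat Mᵒᵈ (dualColor c) φ (OrderDual.toDual ∘ v) := by
  have h := realize_dualFormula c φ v default
  rwa [Subsingleton.elim (OrderDual.toDual ∘ default) default] at h

namespace SelfAdditive

theorem orderDual (h : SelfAdditive ι M c) : SelfAdditive ι Mᵒᵈ (dualColor c) := by
  have := h.1
  refine ⟨inferInstance, fun φ hφ => ?_⟩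
  have hset : FmlSet ι Mᵒᵈ (dualColor c) φ = OrderDual.ofDual ⁻¹' FmlSet ι M c (dualFormula φ) :=
    Set.ext fun x => (sat_dualFormula c φ fun _ => OrderDual.ofDual x).symm
  rw [hset] at hφ ⊢
  exact (h.2 _ (ordConnected_dual.1 hφ)).imp (fun h => by rw [h, preimage_empty])
    fun h => by rw [h, preimage_univ]

theorem noMaxOrder (h : SelfAdditive ι M c) : NoMaxOrder M :=
  have := h.orderDual.noMinOrder
  ⟨fun a => exists_lt (OrderDual.toDual a)⟩

theorem orderTy_Ioi_add_univ (h : SelfAdditive ι M c) (F : Finset ι) (n : ℕ) (d : M) :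
    orderTy (finColor F c) n (Ioi d) + orderTy (finColor F c) n univ =
      orderTy (finColor F c) n (Ioi d) := by
  apply OrderTy.rev_injective
  rw [OrderTy.rev_add, ← orderTy_dualColor, ← orderTy_dualColor]
  exact h.orderDual.orderTy_univ_add_Iio F n (OrderDual.toDual d)

end SelfAdditive

end Duality

section SimRel

variable {ι M : Type} [LinearOrder M] {c : ι → Set M} {b d x : M} {F : Finset ι} {n : ℕ}

theorem ordConnected_setOf_simRel (c : ι → Set M) (b : M) :
    {x | SimRel ι c b x}.OrdConnected := by
  refine ⟨?_⟩
  rintro x ⟨φ, hφ, hu, hl, hb, hx⟩ y ⟨ψ, hψ, hu', hl', hb', hy⟩ z hz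
  rcases le_total b z with hbz | hbz
  · exact ⟨ψ, hψ, hu', hl', hb', hψ.out hb' hy ⟨hbz, hz.2⟩⟩
  · exact ⟨φ, hφ, hu, hl, hb, hφ.out hx hb ⟨hz.1, hbz⟩⟩

namespace SimRel

theorem of_uniformDef {P : ∀ (M : Type) [LinearOrder M], (ι → Set M) → M → M → Prop}
    (hP : UniformDef fun M _ c (v : Unit ⊕ Unit → M) => P M c (v (.inr ())) (v (.inl ())))
    (hconn : {y | P M c b y}.OrdConnected) (habove : ∃ u, ∀ y, P M c b y → y < u)
    (hbelow : ∃ l, ∀ y, P M c b y → l < y) (hb : P M c b b) (hx : P M c b x) :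
    SimRel ι c b x := by
  obtain ⟨φ, hφ⟩ := hP
  have hset : {y | Sat M c φ (Sum.elim (fun _ => y) fun _ => b)} = {y | P M c b y} :=
    Set.ext fun y => hφ M c _
  refine ⟨φ, ?_⟩
  rw [hset]
  exact ⟨hconn, habove, hbelow, hb, hx⟩

theorem of_orderDual (h : SimRel ι (dualColor c) (OrderDual.toDual b) (OrderDual.toDual x)) :
    SimRel ι c b x := by
  obtain ⟨φ, hφ, ⟨u, hu⟩, ⟨l, hl⟩, hb, hx⟩ := h
  have hset : {y | Sat M c (dualFormula φ) (Sum.elim (fun _ => y) fun _ => b)} =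
      OrderDual.toDual ⁻¹' {y | Sat Mᵒᵈ (dualColor c) φ
        (Sum.elim (fun _ => y) fun _ => OrderDual.toDual b)} :=
    Set.ext fun y => (sat_dualFormula c φ _).trans (by rw [Sum.comp_elim]; rfl)
  refine ⟨dualFormula φ, ?_⟩
  rw [hset]
  exact ⟨hφ.dual, ⟨OrderDual.ofDual l, hl⟩, ⟨OrderDual.ofDual u, hu⟩, hb, hx⟩

end SimRel

theorem simRel_orderDual_iff :
    SimRel ι (dualColor c) (OrderDual.toDual b) (OrderDual.toDual x) ↔ SimRel ι c b x :=
  ⟨SimRel.of_orderDual, fun h => SimRel.of_orderDual (M := Mᵒᵈ) h⟩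

namespace SelfAdditive

theorem simRel_self (h : SelfAdditive ι M c) (b : M) : SimRel ι c b b := by
  have := h.noMinOrder
  have := h.noMaxOrder
  obtain ⟨u, hu⟩ := exists_gt b
  obtain ⟨l, hl⟩ := exists_lt b
  refine .of_uniformDef (P := fun M _ _ b y => b ≤ y ∧ y ≤ b) (.and (.le _ _) (.le _ _))
    ordConnected_Icc ⟨u, fun y hy => hy.2.trans_lt hu⟩ ⟨l, fun y hy => hl.trans_le hy.1⟩ ?_ ?_
  all_goals exact ⟨le_rfl, le_rfl⟩

/- If `D` is a bounded convex set witnessing `b ∼ d`, the union of all `[z, e]` with `e ∈ D` and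
with `z ∈ D` or `(z, e)` not an additive gap is again convex, definable from `b`, and bounded. -/
theorem additiveGap_of_simRel (h : SelfAdditive ι M c) (F : Finset ι) (n : ℕ)
    (hd : SimRel ι c b d) (hxd : x < d) (hx : ¬ SimRel ι c b x) :
    AdditiveGap (finColor F c) n x d := by
  have := h.noMinOrder
  have := h.1
  by_contra hgap
  obtain ⟨φ, -, ⟨u, hu⟩, ⟨l, hl⟩, hbφ, hdφ⟩ := hd
  let D (M : Type) [LinearOrder M] (c : ι → Set M) (b e : M) : Prop :=
    Sat M c φ (Sum.elim (fun _ => e) fun _ => b)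
  let P (M : Type) [LinearOrder M] (c : ι → Set M) (b y : M) : Prop :=
    ∃ e z, D M c b e ∧ z ≤ y ∧ y ≤ e ∧ (D M c b z ∨ ¬ AdditiveGap (finColor F c) n z e)
  have hD {α : Type} (i j : α) : UniformDef fun M _ (c : ι → Set M) v => D M c (v i) (v j) :=
    ((UniformDef.sat φ).reindex (Sum.elim (fun _ => j) fun _ => i)).congr fun M _ c v =>
      iff_of_eq (congrArg _ (by ext (i | i) <;> rfl))
  have hP : UniformDef fun M _ c (v : Unit ⊕ Unit → M) => P M c (v (.inr ())) (v (.inl ())) :=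
    .exists_elem <| .exists_elem <| .and (hD _ _) <| .and (.le _ _) <| .and (.le _ _) <|
      .or (hD _ _) (uniformDef_additiveGap F n _ _).not
  have hconn : {y | P M c b y}.OrdConnected := by
    refine ⟨?_⟩
    rintro p ⟨e, z, he, hzp, -, hz⟩ q ⟨e', -, he', -, hqe', -⟩ y ⟨hpy, hyq⟩
    rcases le_total y e with hye | hye
    · exact ⟨e, z, he, hzp.trans hpy, hye, hz⟩
    · exact ⟨e', e, he', hye, hyq.trans hqe', .inl he⟩
  have habove : ∃ u, ∀ y, P M c b y → y < u :=
    ⟨u, fun y ⟨e, _, he, _, hye, _⟩ => hye.trans_lt (hu e he)⟩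
  have hbelow : ∃ l, ∀ y, P M c b y → l < y := by
    obtain ⟨m, hm⟩ := Filter.eventually_atBot.1 ((h.eventually_additiveGap F n l).and
      (Filter.eventually_lt_atBot l))
    refine ⟨m, fun y ⟨e, z, he, hzy, _, hz⟩ => lt_of_lt_of_le (lt_of_not_ge fun hzm => ?_) hzy⟩
    obtain ⟨hgap, hzl⟩ := hm z hzm
    exact hz.elim (fun hz => (hl z hz).not_gt hzl) (not_not_intro (hgap.mono hzl (hl e he).le))
  exact hx <| .of_uniformDef hP hconn habove hbelow ⟨b, b, hbφ, le_rfl, le_rfl, .inl hbφ⟩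
    ⟨d, x, hdφ, le_rfl, hxd.le, .inr hgap⟩

theorem orderTy_univ_add_simRel (h : SelfAdditive ι M c) (F : Finset ι) (n : ℕ)
    (hd : SimRel ι c b d) :
    orderTy (finColor F c) n univ + orderTy (finColor F c) n ({x | SimRel ι c b x} ∩ Iio d) =
      orderTy (finColor F c) n (Iio d) := by
  have := h.noMinOrder
  have := h.1
  induction n generalizing d with
  | zero => rfl
  | succ n ih =>
    set col := finColor F c
    set C := {x | SimRel ι c b x}
    have hclass (x : M) (hx : x ∈ C) (hxd : x < d) : pointTy col n (Iio d) x =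
        ((pointTy col n (C ∩ Iio d) x).1, orderTy col n univ + (pointTy col n (C ∩ Iio d) x).2.1,
          (pointTy col n (C ∩ Iio d) x).2.2) := by
      have hIoo : C ∩ Ioo x d = Ioo x d := inter_eq_right.2 <|
        Ioo_subset_Icc_self.trans ((ordConnected_setOf_simRel c b).out hx hd)
      simp only [pointTy, inter_assoc, Iio_inter_Iio, min_eq_right hxd.le,
        Iio_inter_Ioi, hIoo, ih hx]
    have hgap (x : M) (hx : AdditiveGap col n x d) (hxd : x < d) : pointTy col n (Iio d) x =
        ((pointTy col n univ x).1, (pointTy col n univ x).2.1,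
          (pointTy col n univ x).2.2 + orderTy col n (C ∩ Iio d)) := by
      rw [pointTy_Iio hxd, hx, ← ih hd, ← add_assoc, h.orderTy_Ioi_add_univ]
      simp only [pointTy, univ_inter, col]
    apply OrderTy.elems_injective
    simp only [OrderTy.elems_add, trunc_orderTy, elems_orderTy, image_image]
    refine Subset.antisymm (union_subset ?_ ?_) ?_
    · rintro _ ⟨x, -, rfl⟩
      obtain ⟨m, hm⟩ := Filter.eventually_atBot.1 ((h.eventually_additiveGap F n d).and
        (Filter.eventually_lt_atBot d))
      obtain ⟨y, hym, hyx⟩ := h.exists_le_pointTy_eq F n x m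
      exact ⟨y, (hm y hym).2, by rw [hgap y (hm y hym).1 (hm y hym).2, hyx]⟩
    · rintro _ ⟨x, hx, rfl⟩
      exact ⟨x, hx.2, hclass x hx.1 hx.2⟩
    · rintro _ ⟨x, hxd, rfl⟩
      by_cases hx : x ∈ C
      · exact .inr ⟨x, ⟨hx, hxd⟩, (hclass x hx hxd).symm⟩
      · exact .inl ⟨x, mem_univ x, (hgap x (h.additiveGap_of_simRel F n hd hxd hx) hxd).symm⟩

theorem orderTy_simRel_add_univ (h : SelfAdditive ι M c) (F : Finset ι) (n : ℕ)
    (hd : SimRel ι c b d) :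
    orderTy (finColor F c) n ({x | SimRel ι c b x} ∩ Ioi d) + orderTy (finColor F c) n univ =
      orderTy (finColor F c) n (Ioi d) := by
  have hset : OrderDual.ofDual ⁻¹' ({x | SimRel ι c b x} ∩ Ioi d) =
      {x | SimRel ι (dualColor c) (OrderDual.toDual b) x} ∩ Iio (OrderDual.toDual d) :=
    Set.ext fun x => and_congr_left' simRel_orderDual_iff.symm
  apply OrderTy.rev_injective
  rw [OrderTy.rev_add, ← orderTy_dualColor, ← orderTy_dualColor, ← orderTy_dualColor, hset]
  exact h.orderDual.orderTy_univ_add_simRel F n (simRel_orderDual_iff.2 hd)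

end SelfAdditive

end SimRel

section Sums

variable {α β γ δ K : Type} [LinearOrder γ] [LinearOrder δ]

theorem strictMono_sumLexMap [Preorder α] [Preorder β] {f : α → γ} {g : β → δ} (hf : StrictMono f)
    (hg : StrictMono g) : StrictMono fun x : α ⊕ₗ β => toLex (Sum.map f g (ofLex x)) := by
  rintro _ _ (⟨h⟩ | ⟨h⟩ | _)
  · exact Sum.Lex.inl_lt_inl_iff.2 (hf h)
  · exact Sum.Lex.inr_lt_inr_iff.2 (hg h)
  · exact Sum.Lex.inl_lt_inr _ _

theorem orderTy_range_sumLexMap (col : γ ⊕ₗ δ → K) (n : ℕ) (f : α → γ) (g : β → δ) :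
    orderTy col n (range fun x : α ⊕ₗ β => toLex (Sum.map f g (ofLex x))) =
      orderTy (col ∘ Sum.inlₗ) n (range f) + orderTy (col ∘ Sum.inrₗ) n (range g) := by
  have hrange : (range fun x : α ⊕ₗ β => toLex (Sum.map f g (ofLex x))) =
      Sum.inlₗ '' range f ∪ Sum.inrₗ '' range g := by
    ext x
    simp [Lex.exists, Sum.exists]
  rw [hrange, orderTy_union, orderTy_image _ Sum.Lex.inl_strictMono,
    orderTy_image _ Sum.Lex.inr_strictMono]
  rintro _ ⟨x, -, rfl⟩ _ ⟨y, -, rfl⟩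
  exact Sum.Lex.inl_lt_inr x y

theorem orderTy_univ_sumLex (col : γ ⊕ₗ δ → K) (n : ℕ) :
    orderTy col n univ = orderTy (col ∘ Sum.inlₗ) n univ + orderTy (col ∘ Sum.inrₗ) n univ := by
  simpa only [Sum.map_id_id, id_eq, toLex_ofLex, range_id', range_id] using
    orderTy_range_sumLexMap col n (id : γ → γ) (id : δ → δ)

end Sums

section ConvexHull

variable {M : Type*} [LinearOrder M] {S C : Set M}

theorem exists_subset_Icc_subset (hS : S.Finite) (hSC : S ⊆ C) (hC : C.OrdConnected)
    (hne : C.Nonempty) : ∃ a b, a ≤ b ∧ S ⊆ Icc a b ∧ Icc a b ⊆ C := by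
  obtain ⟨x, hx⟩ := hne
  obtain ⟨a, haS, ha⟩ := exists_min_image (insert x S) id (hS.insert x) (insert_nonempty x S)
  obtain ⟨b, hbS, hb⟩ := exists_max_image (insert x S) id (hS.insert x) (insert_nonempty x S)
  have hxSC : insert x S ⊆ C := insert_subset hx hSC
  exact ⟨a, b, ha b hbS, fun y hy => ⟨ha y (.inr hy), hb y (.inr hy)⟩,
    hC.out (hxSC haS) (hxSC hbS)⟩

end ConvexHull

section SimRelSum

variable {ι A A' B K : Type} [LinearOrder A] [LinearOrder A'] [LinearOrder B] {cA : ι → Set A}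
  {cA' : ι → Set A'} {cB : ι → Set B} {b d : B}

namespace SelfAdditive

theorem orderTy_Ioi_add_simRel (hB : SelfAdditive ι B cB) (hA : CLOEquiv ι A cA B cB)
    (F : Finset ι) (n : ℕ) (a : A) (hd : SimRel ι cB b d) :
    orderTy (finColor F cA) n (Ioi a) +
        orderTy (finColor F cB) n ({x | SimRel ι cB b x} ∩ Iio d) =
      orderTy (finColor F cA) n (Ioi a) + orderTy (finColor F cB) n (Iio d) := by
  obtain ⟨a', ha'⟩ := hA.exists_pointTy_eq F n a
  simp only [pointTy, univ_inter, Prod.mk.injEq] at ha'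
  rw [← ha'.2.2, ← hB.orderTy_univ_add_simRel F n hd, ← add_assoc, hB.orderTy_Ioi_add_univ]

theorem orderTy_simRel_add_Iio (hB : SelfAdditive ι B cB) (hA' : CLOEquiv ι A' cA' B cB)
    (F : Finset ι) (n : ℕ) (a : A') (hd : SimRel ι cB b d) :
    orderTy (finColor F cB) n ({x | SimRel ι cB b x} ∩ Ioi d) +
        orderTy (finColor F cA') n (Iio a) =
      orderTy (finColor F cB) n (Ioi d) + orderTy (finColor F cA') n (Iio a) := by
  obtain ⟨a', ha'⟩ := hA'.exists_pointTy_eq F n a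
  simp only [pointTy, univ_inter, Prod.mk.injEq] at ha'
  rw [← ha'.2.1, ← hB.orderTy_simRel_add_univ F n hd, add_assoc, hB.orderTy_univ_add_Iio]

theorem orderTy_univ_add_simRel_inter_Iio (hB : SelfAdditive ι B cB) (hA : CLOEquiv ι A cA B cB)
    {F : Finset ι} {g : Set F → K} {col : A → K} {colB : B → K}
    (hcol : {x | col x ≠ g (finColor F cA x)}.Finite) (hd : SimRel ι cB b d)
    (hcolB : EqOn colB (g ∘ finColor F cB) (Iio d)) (n : ℕ) :
    orderTy col n univ + orderTy colB n ({x | SimRel ι cB b x} ∩ Iio d) =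
      orderTy col n univ + orderTy colB n (Iio d) := by
  have : Nonempty A := ⟨(hA.symm.exists_pointTy_eq F 0 b).choose⟩
  obtain ⟨a, ha⟩ := hcol.bddAbove
  have hcolA : EqOn col (g ∘ finColor F cA) (Ioi a) :=
    fun x hx => by_contra fun hne => (ha hne).not_gt hx
  rw [orderTy_univ_eq_Iic_add col n a, orderTy_eq_map_of_eqOn hcolA, orderTy_eq_map_of_eqOn hcolB,
    orderTy_eq_map_of_eqOn (hcolB.mono inter_subset_right), add_assoc, add_assoc,
    ← OrderTy.map_add, ← OrderTy.map_add, hB.orderTy_Ioi_add_simRel hA F n a hd]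

theorem orderTy_simRel_inter_Ioi_add_univ (hB : SelfAdditive ι B cB)
    (hA' : CLOEquiv ι A' cA' B cB) {F : Finset ι} {g : Set F → K} {col' : A' → K} {colB : B → K}
    (hcol' : {x | col' x ≠ g (finColor F cA' x)}.Finite) (hd : SimRel ι cB b d)
    (hcolB : EqOn colB (g ∘ finColor F cB) (Ioi d)) (n : ℕ) :
    orderTy colB n ({x | SimRel ι cB b x} ∩ Ioi d) + orderTy col' n univ =
      orderTy colB n (Ioi d) + orderTy col' n univ := by
  have : Nonempty A' := ⟨(hA'.symm.exists_pointTy_eq F 0 b).choose⟩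
  obtain ⟨a, ha⟩ := hcol'.bddBelow
  have hcolA' : EqOn col' (g ∘ finColor F cA') (Iio a) :=
    fun x hx => by_contra fun hne => (ha hne).not_gt hx
  rw [orderTy_univ_eq_Iio_add_Ici col' n a, orderTy_eq_map_of_eqOn hcolA',
    orderTy_eq_map_of_eqOn hcolB, orderTy_eq_map_of_eqOn (hcolB.mono inter_subset_right),
    ← add_assoc, ← add_assoc, ← OrderTy.map_add, ← OrderTy.map_add,
    hB.orderTy_simRel_add_Iio hA' F n a hd]

theorem orderTy_add_simRel_add (hB : SelfAdditive ι B cB) (hA : CLOEquiv ι A cA B cB)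
    (hA' : CLOEquiv ι A' cA' B cB) {F : Finset ι} {g : Set F → K} {col : A → K} {colB : B → K}
    {col' : A' → K} (hcol : {x | col x ≠ g (finColor F cA x)}.Finite)
    (hcolB : {x | colB x ≠ g (finColor F cB x)}.Finite)
    (hcol' : {x | col' x ≠ g (finColor F cA' x)}.Finite)
    (hsub : {x | colB x ≠ g (finColor F cB x)} ⊆ {x | SimRel ι cB b x}) (n : ℕ) :
    orderTy col n univ + (orderTy colB n {x | SimRel ι cB b x} + orderTy col' n univ) =
      orderTy col n univ + (orderTy colB n univ + orderTy col' n univ) := by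
  obtain ⟨lo, hi, hlohi, hIcc, hC⟩ := exists_subset_Icc_subset hcolB hsub
    (ordConnected_setOf_simRel cB b) ⟨b, hB.simRel_self b⟩
  have hlo := hB.orderTy_univ_add_simRel_inter_Iio (colB := colB) hA hcol
    (hC (left_mem_Icc.2 hlohi)) (fun x hx => by_contra fun hne => (hIcc hne).1.not_gt hx) n
  have hhi := hB.orderTy_simRel_inter_Ioi_add_univ (colB := colB) hA' hcol'
    (hC (right_mem_Icc.2 hlohi)) (fun x hx => by_contra fun hne => (hIcc hne).2.not_gt hx) n
  rw [orderTy_eq_inter_Iio_add_Icc_add colB n hlohi hC,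
    orderTy_eq_inter_Iio_add_Icc_add colB n hlohi (subset_univ _), univ_inter, univ_inter,
    add_assoc _ _ (orderTy col' n univ), hhi]
  simp only [← add_assoc, hlo]

end SelfAdditive

end SimRelSum

theorem stmt7_general {ι A A' B : Type} [LinearOrder A] [LinearOrder A'] [LinearOrder B]
    (cA : ι → Set A) (cA' : ι → Set A') (cB : ι → Set B) (hB : SelfAdditive ι B cB)
    (hA : CLOEquiv ι A cA B cB) (hA' : CLOEquiv ι A' cA' B cB) (b : B) :
    IsElemMap ι
      (sumColor2 cA (sumColor2 (subColor cB {x | SimRel ι cB b x}) cA'))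
      (sumColor2 cA (sumColor2 cB cA'))
      (fun x => toLex (Sum.map id
        (fun y => toLex (Sum.map (Subtype.val : {x | SimRel ι cB b x} → B) id (ofLex y)))
        (ofLex x))) := by
  refine isElemMap_of_orderTy_range
    (strictMono_sumLexMap strictMono_id
      (strictMono_sumLexMap (Subtype.strictMono_coe _) strictMono_id))
    (by rintro i (x | x | x) <;> rfl) fun F n k w => ?_
  simp only [orderTy_range_sumLexMap, orderTy_univ_sumLex, range_id, Subtype.range_coe]
  set w' := _ ∘ w with hw'
  have hfin {X : Type} {e : X → A ⊕ₗ (B ⊕ₗ A')} (he : Function.Injective e) :=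
    finite_setOf_markCol_ne (F := F) he (sumColor2 cA (sumColor2 cB cA')) w'
  refine hB.orderTy_add_simRel_add hA hA' (g := (·, ∅)) (hfin Sum.inl_injective)
    (hfin (Sum.inr_injective.comp Sum.inl_injective))
    (hfin (Sum.inr_injective.comp Sum.inr_injective)) (fun x hx => ?_) n
  obtain ⟨j, hj⟩ := markCol_ne_iff.1 hx
  rw [hw', Function.comp_apply] at hj
  generalize w j = z at hj
  rcases z with y | y | y
  · cases hj
  · obtain rfl : y = x := Sum.inl_injective (Sum.inr_injective hj)
    exact y.2
  · cases hj

theorem stmt7 {ι : Type} [Countable ι] {A B : Type} [LinearOrder A] [LinearOrder B]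
    (cA : ι → Set A) (cB : ι → Set B)
    (hA : SelfAdditive ι A cA) (hB : SelfAdditive ι B cB)
    (hAB : CLOEquiv ι A cA B cB) (b : B) :
    IsElemMap ι
      (sumColor2 cA (sumColor2 (subColor cB {x | SimRel ι cB b x}) cA))
      (sumColor2 cA (sumColor2 cB cA))
      (fun x => toLex (Sum.map id
        (fun y => toLex (Sum.map (Subtype.val : {x | SimRel ι cB b x} → B) id (ofLex y)))
        (ofLex x))) :=
  stmt7_general cA cA cB hB hAB hAB b
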